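/- Let y, λ : [0,∞) → ℝ be càdlàg functions with y_0 ≥ λ_0. Define k_t = sup_{s≤t} (λ_s − y_s)⁺ (where a⁺ = max(a, 0)) and x_t = y_t + k_t. Then k is nondecreasing and càdlàg with k_0 = 0, x_t ≥ λ_t for all t ≥ 0, and ∫_{[0,t]} (x_s − λ_s) dk_s = 0 for every t ≥ 0, where dk denotes the Lebesgue–Stieltjes measure of the nondecreasing right-continuous function k; that is, (x, k) solves the deterministic Skorokhod problem with the single lower barrier λ. -/

import Mathlib

open MeasureTheory Filter Set Function Topology

noncomputable section

/-- A function with values in a topological space is càdlàg on `[0,∞)`: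
right-continuous at every `t ≥ 0` and admitting a left limit at every `t > 0`. -/
def CadlagOn {E : Type*} [TopologicalSpace E] (f : ℝ → E) : Prop :=
  (∀ t : ℝ, 0 ≤ t → ContinuousWithinAt f (Set.Ici t) t) ∧
  ∀ t : ℝ, 0 < t → ∃ L : E, Filter.Tendsto f (nhdsWithin t (Set.Iio t)) (nhds L)

/-- Condition (H) on `h : [0,∞) × ℝ → ℝ` with constants `Mh, Lh, ch, Ch`. -/
structure CondH (h : ℝ → ℝ → ℝ) (Mh Lh ch Ch : ℝ) : Prop where
  meas : Measurable (Function.uncurry h)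
  Mh_pos : 0 < Mh
  Lh_pos : 0 < Lh
  ch_pos : 0 < ch
  Ch_pos : 0 < Ch
  growth : ∀ t x : ℝ, 0 ≤ t → |h t x| ≤ Mh * (1 + |x|)
  strict_mono : ∀ t : ℝ, 0 ≤ t → StrictMono (h t)
  lip_time : ∀ s t x : ℝ, 0 ≤ s → 0 ≤ t → |h t x - h s x| ≤ Lh * |t - s|
  lip_lower : ∀ t x y : ℝ, 0 ≤ t → ch * |x - y| ≤ |h t x - h t y|
  lip_upper : ∀ t x y : ℝ, 0 ≤ t → |h t x - h t y| ≤ Ch * |x - y|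

/-- A process with càdlàg paths, integrable values, and values uniformly integrable
on every compact time interval. -/
structure NiceProcess {Ω : Type*} [MeasurableSpace Ω] (μ : Measure Ω) (Y : ℝ → Ω → ℝ) : Prop where
  cadlag : ∀ ω, CadlagOn fun t => Y t ω
  integrable : ∀ t : ℝ, 0 ≤ t → Integrable (Y t) μ
  unifInt : ∀ q : ℝ, 0 ≤ q → UniformIntegrable (fun t : Set.Icc (0:ℝ) q => Y t.1) 1 μ

/-- Solution of the Skorokhod problem with mean minimality condition and two constraints
associated with `(h, Y, l, u)`. -/
def MeanSP {Ω : Type*} [MeasurableSpace Ω] (μ : Measure Ω) (h : ℝ → ℝ → ℝ)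
    (Y : ℝ → Ω → ℝ) (l u : ℝ → ℝ) (X : ℝ → Ω → ℝ) (k : ℝ → ℝ) : Prop :=
  (∀ ω, CadlagOn fun t => X t ω) ∧ CadlagOn k ∧ k 0 = 0 ∧
  (∀ t : ℝ, 0 ≤ t → ∀ ω, X t ω = Y t ω + k t) ∧
  (∀ t : ℝ, 0 ≤ t → (∫ ω, h t (X t ω) ∂μ) ∈ Set.Icc (l t) (u t)) ∧
  (∀ t q : ℝ, 0 ≤ t → t ≤ q →
    ((∀ s : ℝ, t < s → s ≤ q → (∫ ω, h s (X s ω) ∂μ) < u s) → 0 ≤ k q - k t) ∧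
    ((∀ s : ℝ, t < s → s ≤ q → l s < ∫ ω, h s (X s ω) ∂μ) → k q - k t ≤ 0)) ∧
  ∀ t : ℝ, 0 < t →
    ((∫ ω, h t (X t ω) ∂μ) < u t → 0 ≤ k t - Function.leftLim k t) ∧
    (l t < ∫ ω, h t (X t ω) ∂μ → k t - Function.leftLim k t ≤ 0)

/-- Solution of the deterministic Skorokhod problem with two time-dependent barriers. -/
def DetSP (y lb ub x k : ℝ → ℝ) : Prop :=
  CadlagOn x ∧ CadlagOn k ∧ k 0 = 0 ∧
  (∀ t : ℝ, 0 ≤ t → x t = y t + k t ∧ x t ∈ Set.Icc (lb t) (ub t)) ∧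
  (∀ t q : ℝ, 0 ≤ t → t ≤ q →
    ((∀ s : ℝ, t < s → s ≤ q → x s < ub s) → 0 ≤ k q - k t) ∧
    ((∀ s : ℝ, t < s → s ≤ q → lb s < x s) → k q - k t ≤ 0)) ∧
  ∀ t : ℝ, 0 < t →
    (x t < ub t → 0 ≤ k t - Function.leftLim k t) ∧
    (lb t < x t → k t - Function.leftLim k t ≤ 0)

/-- Solution of the Skorokhod problem with mean minimality condition and a single
lower barrier `l`.  The minimality condition `∫ (E[h(s,X_s)] - l_s) dk_s = 0` is expressed
through any measure `ν` that agrees with the Lebesgue–Stieltjes measure of `k` on `[0,∞)`. -/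
def MeanSPLower {Ω : Type*} [MeasurableSpace Ω] (μ : Measure Ω) (h : ℝ → ℝ → ℝ)
    (Y : ℝ → Ω → ℝ) (l : ℝ → ℝ) (X : ℝ → Ω → ℝ) (k : ℝ → ℝ) : Prop :=
  (∀ ω, CadlagOn fun t => X t ω) ∧ CadlagOn k ∧ k 0 = 0 ∧
  (∀ t : ℝ, 0 ≤ t → ∀ ω, X t ω = Y t ω + k t) ∧
  (∀ t : ℝ, 0 ≤ t → l t ≤ ∫ ω, h t (X t ω) ∂μ) ∧
  MonotoneOn k (Set.Ici 0) ∧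
  ∀ ν : Measure ℝ,
    (∀ a b : ℝ, 0 ≤ a → a ≤ b → ν (Set.Ioc a b) = ENNReal.ofReal (k b - k a)) →
    ν {0} = 0 →
    ∀ t : ℝ, 0 ≤ t → (∫ s in Set.Icc 0 t, ((∫ ω, h s (X s ω) ∂μ) - l s) ∂ν) = 0

/-- Solution of the Skorokhod problem with mean minimality condition and a single
upper barrier `u`.  The minimality condition `∫ (u_s - E[h(s,X_s)]) d(-k)_s = 0` is expressed
through any measure `ν` that agrees with the Lebesgue–Stieltjes measure of `-k` on `[0,∞)`. -/
def MeanSPUpper {Ω : Type*} [MeasurableSpace Ω] (μ : Measure Ω) (h : ℝ → ℝ → ℝ)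
    (Y : ℝ → Ω → ℝ) (u : ℝ → ℝ) (X : ℝ → Ω → ℝ) (k : ℝ → ℝ) : Prop :=
  (∀ ω, CadlagOn fun t => X t ω) ∧ CadlagOn k ∧ k 0 = 0 ∧
  (∀ t : ℝ, 0 ≤ t → ∀ ω, X t ω = Y t ω + k t) ∧
  (∀ t : ℝ, 0 ≤ t → (∫ ω, h t (X t ω) ∂μ) ≤ u t) ∧
  AntitoneOn k (Set.Ici 0) ∧
  ∀ ν : Measure ℝ,
    (∀ a b : ℝ, 0 ≤ a → a ≤ b → ν (Set.Ioc a b) = ENNReal.ofReal (k a - k b)) →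
    ν {0} = 0 →
    ∀ t : ℝ, 0 ≤ t → (∫ s in Set.Icc 0 t, (u s - ∫ ω, h s (X s ω) ∂μ) ∂ν) = 0

/-- `OscN x η q` is the number of `η`-oscillations of `x` on `[0,q]`: the largest `m`
for which there are `0 ≤ t₁ ≤ t₂ ≤ ⋯ ≤ t_{2m} ≤ q` with `|x(t_{2i}) - x(t_{2i-1})| > η`. -/
def OscN (x : ℝ → ℝ) (η q : ℝ) : ℕ :=
  sSup {m : ℕ | ∃ a b : Fin m → ℝ,
    (∀ i, 0 ≤ a i ∧ a i ≤ b i ∧ b i ≤ q) ∧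
    (∀ i j, i < j → b i ≤ a j) ∧
    ∀ i, η < |x (b i) - x (a i)|}

/-- The left limit at `t` of a càdlàg function on `[0,∞)`, with the convention
`x(0-) = x(0)`. -/
def leftLimAt {E : Type*} [TopologicalSpace E] (x : ℝ → E) (t : ℝ) : E :=
  if t = 0 then x 0 else Function.leftLim x t

/-- Convergence `xₙ → x` in the Skorokhod `J₁` topology on `D([0,∞), E)`, expressed via
the sequence characterization used in the paper. -/
def DConvOn {E : Type*} [TopologicalSpace E] (xs : ℕ → ℝ → E) (x : ℝ → E) : Prop :=
  ∀ t : ℝ, 0 ≤ t → ∃ tn : ℕ → ℝ,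
    (∀ n, 0 ≤ tn n) ∧ Filter.Tendsto tn Filter.atTop (nhds t) ∧
    ∀ t' t'' : ℕ → ℝ, (∀ n, 0 ≤ t' n) → (∀ n, 0 ≤ t'' n) →
      Filter.Tendsto t' Filter.atTop (nhds t) → Filter.Tendsto t'' Filter.atTop (nhds t) →
      (∀ n, t' n < tn n ∧ tn n ≤ t'' n) →
      Filter.Tendsto (fun n => xs n (t' n)) Filter.atTop (nhds (leftLimAt x t)) ∧
      Filter.Tendsto (fun n => xs n (t'' n)) Filter.atTop (nhds (x t))

theorem aux_bdd (f : ℝ → ℝ) (hf : CadlagOn f) (t : ℝ) : BddAbove (f '' Set.Icc 0 t) := by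
  refine isCompact_Icc.induction_on (p := fun S => BddAbove (f '' S)) (by simp) ?_ ?_ ?_
  · intro s t hst ht
    exact ht.mono (image_mono hst)
  · intro s t hs ht
    rw [image_union]
    exact hs.union ht
  · intro s hs
    have key : ∀ l : Filter ℝ, ∀ L : ℝ, Tendsto f l (𝓝 L) → ∃ M, ∀ᶠ u in l, f u ≤ M := by
      intro l L h
      exact ⟨L + 1, (h.eventually (gt_mem_nhds (lt_add_one L))).mono fun _ h => le_of_lt h⟩
    obtain ⟨M, hM⟩ := key _ _ (hf.1 s hs.1)
    rcases eq_or_lt_of_le hs.1 with h | h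
    · subst h
      refine ⟨{u | f u ≤ M}, nhdsWithin_mono _ (fun u hu => hu.1) hM, M, ?_⟩
      rintro _ ⟨u, hu, rfl⟩
      exact hu
    · obtain ⟨L, hL⟩ := hf.2 s h
      obtain ⟨N, hN⟩ := key _ _ hL
      have h2 : ∀ᶠ u in 𝓝 s, f u ≤ max M N := by
        rw [← nhdsLT_sup_nhdsGE, eventually_sup]
        exact ⟨hN.mono fun u hu => le_max_of_le_right hu,
          hM.mono fun u hu => le_max_of_le_left hu⟩
      refine ⟨{u | f u ≤ max M N}, mem_nhdsWithin_of_mem_nhds h2, max M N, ?_⟩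
      rintro _ ⟨u, hu, rfl⟩
      exact hu

theorem aux_null (ν : Measure ℝ) (B : Set ℝ) (r : ℝ → ℝ) (hr : ∀ s ∈ B, s < r s)
    (h1 : ∀ s ∈ B, ν (Ioo s (r s)) = 0) (h2 : ∀ s ∈ B, ν {s} = 0) : ν B = 0 := by
  set U : Set ℝ := ⋃ s ∈ B, Ioo s (r s) with hU
  have hU0 : ν U = 0 := by
    apply measure_null_of_locally_null
    intro u hu
    simp only [hU, mem_iUnion] at hu
    obtain ⟨s, hs, hus⟩ := hu
    exact ⟨Ioo s (r s), mem_nhdsWithin_of_mem_nhds (Ioo_mem_nhds hus.1 hus.2), h1 s hs⟩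
  have hc : (B \ U).Countable := by
    apply Set.PairwiseDisjoint.countable_of_Ioo (y := r) _ (fun s hs => hr s hs.1)
    have main : ∀ a ∈ B \ U, ∀ b ∈ B \ U, a < b → Disjoint (Ioo a (r a)) (Ioo b (r b)) := by
      intro a ha b hb hab
      rw [Set.disjoint_left]
      intro u hu hv
      apply hb.2
      simp only [hU, mem_iUnion]
      exact ⟨a, ha.1, hab, hv.1.trans hu.2⟩
    intro a ha b hb hab
    rcases lt_or_gt_of_ne hab with h | h
    · exact main a ha b hb h
    · exact (main b hb a ha h).symm
  have hB0 : ν (B \ U) = 0 := by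
    rw [← biUnion_of_singleton (B \ U), measure_biUnion_null_iff hc]
    exact fun s hs => h2 s hs.1
  refine measure_mono_null (fun s hs => ?_) (measure_union_null hU0 hB0)
  by_cases h : s ∈ U
  · exact Or.inl h
  · exact Or.inr ⟨hs, h⟩

/-- the explicit solution of the deterministic Skorokhod problem with one
lower barrier. -/
theorem stmt_17 (y lam : ℝ → ℝ) (hy : CadlagOn y) (hlam : CadlagOn lam)
    (h0 : lam 0 ≤ y 0) (k x : ℝ → ℝ)
    (hk : ∀ t : ℝ, k t = sSup ((fun s => max (lam s - y s) 0) '' Set.Icc 0 t))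
    (hx : ∀ t : ℝ, x t = y t + k t) :
    MonotoneOn k (Set.Ici 0) ∧ CadlagOn k ∧ k 0 = 0 ∧
    (∀ t : ℝ, 0 ≤ t → lam t ≤ x t) ∧
    ∀ ν : Measure ℝ,
      (∀ a b : ℝ, 0 ≤ a → a ≤ b → ν (Set.Ioc a b) = ENNReal.ofReal (k b - k a)) →
      ν {0} = 0 →
      ∀ t : ℝ, 0 ≤ t → (∫ s in Set.Icc 0 t, (x s - lam s) ∂ν) = 0 := by
  have hg : CadlagOn (fun s => max (lam s - y s) 0) := by
    refine ⟨fun t ht => ((hlam.1 t ht).sub (hy.1 t ht)).max continuousWithinAt_const, ?_⟩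
    intro t ht
    obtain ⟨a, ha⟩ := hlam.2 t ht
    obtain ⟨b, hb⟩ := hy.2 t ht
    exact ⟨_, (ha.sub hb).max tendsto_const_nhds⟩
  have hkge : ∀ s t, 0 ≤ s → s ≤ t → max (lam s - y s) 0 ≤ k t := by
    intro s t hs hst
    rw [hk t]
    exact le_csSup (aux_bdd _ hg t) ⟨s, ⟨hs, hst⟩, rfl⟩
  have hk0 : ∀ t, 0 ≤ k t := by
    intro t
    rw [hk t]
    apply Real.sSup_nonneg
    rintro _ ⟨u, hu, rfl⟩
    exact le_max_right _ _
  have hkle : ∀ t c, 0 ≤ c → (∀ s, 0 ≤ s → s ≤ t → lam s - y s ≤ c) → k t ≤ c := by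
    intro t c hc h
    rw [hk t]
    apply Real.sSup_le _ hc
    rintro _ ⟨u, hu, rfl⟩
    exact max_le (h u hu.1 hu.2) hc
  have hgk : ∀ s t, 0 ≤ s → s ≤ t → lam s - y s ≤ k t := fun s t hs hst =>
    (le_max_left _ _).trans (hkge s t hs hst)
  have hmono : Monotone k := fun a b hab =>
    hkle a _ (hk0 b) fun s hs hsa => hgk s b hs (hsa.trans hab)
  -- local bound to the right
  have hright : ∀ t, 0 ≤ t → ∀ c, k t ≤ c → lam t - y t < c →
      ∃ r, t < r ∧ ∀ u, u < r → k u ≤ c := by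
    intro t ht c hc hlt
    have hev : ∀ᶠ u in 𝓝[≥] t, lam u - y u < c :=
      ((hlam.1 t ht).sub (hy.1 t ht)).eventually (gt_mem_nhds hlt)
    obtain ⟨r, hr, hsub⟩ := mem_nhdsGE_iff_exists_Ico_subset.1 hev
    refine ⟨r, hr, fun u hu => hkle u c ((hk0 t).trans hc) fun s hs hsu => ?_⟩
    rcases le_total s t with h | h
    · exact (hgk s t hs h).trans hc
    · exact le_of_lt (hsub ⟨h, hsu.trans_lt hu⟩)
  refine ⟨hmono.monotoneOn _, ⟨?_, fun t _ => ⟨_, hmono.tendsto_leftLim t⟩⟩, ?_, ?_, ?_⟩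
  · intro t ht
    rw [Metric.continuousWithinAt_iff]
    intro ε hε
    obtain ⟨r, hr, h⟩ := hright t ht (k t + ε / 2) (by linarith)
      (by linarith [hgk t t ht le_rfl])
    refine ⟨r - t, by linarith, fun {u} hu hd => ?_⟩
    have h1 := hmono (show t ≤ u from hu)
    rw [Real.dist_eq] at hd ⊢
    have h2 := h u (by linarith [(abs_lt.1 hd).2])
    rw [abs_lt]
    constructor <;> linarith
  · refine le_antisymm (hkle 0 0 le_rfl fun s hs hs' => ?_) (hk0 0)
    obtain rfl : s = 0 := le_antisymm hs' hs
    linarith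
  · intro t ht
    rw [hx]
    linarith [hgk t t ht le_rfl]
  · intro ν hν hν0 t ht
    apply integral_eq_zero_of_ae
    refine (ae_restrict_iff' measurableSet_Icc).2 ?_
    set B : Set ℝ := {s | 0 < s ∧ lam s - y s < k s} with hB
    have hr : ∀ s, ∃ r, s ∈ B → s < r ∧ ∀ u, u < r → k u ≤ k s := by
      intro s
      by_cases hs : s ∈ B
      · obtain ⟨r, h⟩ := hright s hs.1.le (k s) le_rfl hs.2
        exact ⟨r, fun _ => h⟩
      · exact ⟨0, fun h => absurd h hs⟩
    choose r hr using hr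
    have hmid : ∀ s ∈ B, s < (s + r s) / 2 ∧ (s + r s) / 2 < r s := by
      intro s hs
      have := (hr s hs).1
      constructor <;> linarith
    have hBnull : ν B = 0 := by
      apply aux_null ν B (fun s => (s + r s) / 2) (fun s hs => (hmid s hs).1)
      · intro s hs
        refine measure_mono_null Ioo_subset_Ioc_self ?_
        rw [hν _ _ hs.1.le (hmid s hs).1.le, ENNReal.ofReal_eq_zero]
        linarith [(hr s hs).2 _ (hmid s hs).2]
      · intro s hs
        have hex : ∀ ε : ℝ, 0 < ε → ∃ a, 0 ≤ a ∧ a < s ∧ k s - k a ≤ ε := by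
          intro ε hε
          by_contra! hcon
          have h0' := hcon 0 le_rfl hs.1
          have hkpos : ε < k s := by linarith [hk0 0]
          have : k s ≤ max (lam s - y s) (k s - ε) := by
            refine hkle s _ (le_max_of_le_right (by linarith)) fun u hu hus => ?_
            rcases eq_or_lt_of_le hus with h | h
            · subst h
              exact le_max_left _ _
            · refine le_max_of_le_right ?_
              linarith [hcon u hu h, hgk u u hu le_rfl]
          rcases le_max_iff.1 this with h | h
          · linarith [hs.2]
          · linarith
        refine le_antisymm (le_of_forall_pos_le_add ?_) zero_le
        intro ε hε
        rw [zero_add]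
        rcases eq_or_ne ε ⊤ with h | h
        · simp [h]
        · obtain ⟨a, ha, has, hle⟩ := hex ε.toReal (ENNReal.toReal_pos hε.ne' h)
          calc ν {s} ≤ ν (Ioc a s) := measure_mono (by simpa using has)
            _ = ENNReal.ofReal (k s - k a) := hν a s ha has.le
            _ ≤ ENNReal.ofReal ε.toReal := ENNReal.ofReal_le_ofReal hle
            _ = ε := ENNReal.ofReal_toReal h
    refine measure_mono_null (fun s hs => ?_) (measure_union_null hν0 hBnull)
    simp only [mem_compl_iff, mem_ofPred_eq, Classical.not_imp] at hs
    obtain ⟨hs1, hs2⟩ := hs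
    rcases eq_or_lt_of_le hs1.1 with h | h
    · exact Or.inl h.symm
    · refine Or.inr ⟨h, lt_of_le_of_ne (hgk s s h.le le_rfl) fun heq => hs2 ?_⟩
      simp only [Pi.zero_apply, hx]
      linarith
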